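/- arXiv:1407.4416 — 3 statements merged into one kernel-verified Lean document; each statement's English description precedes it below -/
import Mathlib

section
/- For any two nonempty finite sets W1, W2, the resemblance R = |W1 ∩ W2| / |W1 ∪ W2| is bounded above by S/(2 − S), where S = |W1 ∩ W2| / √(|W1|·|W2|) is the cosine similarity; that is, R ≤ S/(2 − S). -/
/-!
The resemblance `R` and the Dice coefficient `D = 2a / (f₁ + f₂)`, where `a` is the size of the
intersection, determine each other by `R = D / (2 - D)`. The Dice coefficient divides `a` by the
arithmetic mean of the two cardinalities and the cosine similarity `S` divides it by their
geometric mean, so AM-GM gives `D ≤ S`. As `S ≤ 1 < 2`, it remains to apply the map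
`x ↦ x / (2 - x)`, which is increasing below `2`.
-/

section Field

variable {K : Type*} [Field K]

theorem div_div_sub_div {q : K} (hq : q ≠ 0) (a c : K) :
    a / q / (c - a / q) = a / (c * q - a) := by
  rw [sub_div' hq, div_div_div_cancel_right₀ hq]

theorem monotoneOn_div_sub [LinearOrder K] [IsStrictOrderedRing K] {c : K} (hc : 0 ≤ c) :
    MonotoneOn (fun x : K ↦ x / (c - x)) (Set.Iio c) := by
  intro x hx y hy hxy
  have h_cross : x * (c - y) ≤ y * (c - x) := by
    linarith [mul_le_mul_of_nonneg_left hxy hc]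
  exact (div_le_div_iff₀ (sub_pos.mpr hx) (sub_pos.mpr hy)).mpr h_cross

end Field

section Similarity

variable {α : Type*} [DecidableEq α] {s t : Finset α}

/-- The resemblance (Jaccard similarity) of two finite sets. -/
noncomputable def resemblance (s t : Finset α) : ℝ :=
  ((s ∩ t).card : ℝ) / ((s ∪ t).card : ℝ)

/-- The cosine similarity of two finite sets, that is, of their indicator vectors. -/
noncomputable def cosineSimilarity (s t : Finset α) : ℝ :=
  ((s ∩ t).card : ℝ) / √((s.card : ℝ) * (t.card : ℝ))

/-- The Dice coefficient of two finite sets, through which the resemblance is compared with the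
cosine similarity. It is usually written `2 * |s ∩ t| / (|s| + |t|)`; here the denominator is the
arithmetic mean of the cardinalities. -/
noncomputable def diceCoefficient (s t : Finset α) : ℝ :=
  ((s ∩ t).card : ℝ) / (((s.card : ℝ) + t.card) / 2)

theorem resemblance_eq_diceCoefficient_div (h : (s ∪ t).Nonempty) :
    resemblance s t = diceCoefficient s t / (2 - diceCoefficient s t) := by
  have h_union : ((s ∪ t).card : ℝ) + (s ∩ t).card = s.card + t.card := by
    exact_mod_cast Finset.card_union_add_card_inter s t
  have h_pos : (0 : ℝ) < (s ∪ t).card := by exact_mod_cast h.card_pos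
  have h_mean : ((s.card : ℝ) + t.card) / 2 ≠ 0 := by
    rw [← h_union]
    exact (half_pos (add_pos_of_pos_of_nonneg h_pos (Nat.cast_nonneg _))).ne'
  rw [resemblance, diceCoefficient, div_div_sub_div h_mean, mul_div_cancel₀ _ two_ne_zero,
    ← h_union, add_sub_cancel_right]

theorem diceCoefficient_le_cosineSimilarity (hs : s.Nonempty) (ht : t.Nonempty) :
    diceCoefficient s t ≤ cosineSimilarity s t := by
  have hs_pos : (0 : ℝ) < s.card := by exact_mod_cast hs.card_pos
  have ht_pos : (0 : ℝ) < t.card := by exact_mod_cast ht.card_pos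
  have h_am_gm : √((s.card : ℝ) * t.card) ≤ ((s.card : ℝ) + t.card) / 2 := by
    simpa using NNReal.coe_le_coe.mpr (NNReal.sqrt_mul_le_half_add s.card t.card)
  exact div_le_div_of_nonneg_left (Nat.cast_nonneg _) (Real.sqrt_pos.mpr (mul_pos hs_pos ht_pos))
    h_am_gm

theorem card_inter_le_sqrt_card_mul_card (s t : Finset α) :
    ((s ∩ t).card : ℝ) ≤ √((s.card : ℝ) * (t.card : ℝ)) := by
  apply Real.le_sqrt_of_sq_le
  rw [sq]
  gcongr
  · exact Finset.inter_subset_left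
  · exact Finset.inter_subset_right

theorem cosineSimilarity_le_one (s t : Finset α) : cosineSimilarity s t ≤ 1 :=
  div_le_one_of_le₀ (card_inter_le_sqrt_card_mul_card s t) (Real.sqrt_nonneg _)

theorem minhash_upper_bound_general (hs : s.Nonempty) (ht : t.Nonempty) :
    resemblance s t ≤ cosineSimilarity s t / (2 - cosineSimilarity s t) := by
  have h_dice_le : diceCoefficient s t ≤ cosineSimilarity s t :=
    diceCoefficient_le_cosineSimilarity hs ht
  have h_cosine_lt : cosineSimilarity s t < 2 :=
    (cosineSimilarity_le_one s t).trans_lt one_lt_two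
  calc
    resemblance s t = diceCoefficient s t / (2 - diceCoefficient s t) :=
      resemblance_eq_diceCoefficient_div (hs.mono Finset.subset_union_left)
    _ ≤ cosineSimilarity s t / (2 - cosineSimilarity s t) :=
      monotoneOn_div_sub zero_le_two (h_dice_le.trans_lt h_cosine_lt) h_cosine_lt h_dice_le

end Similarity

/-- Upper bound: for nonempty finite sets `W1, W2`, the resemblance
`R = |W1 ∩ W2| / |W1 ∪ W2|` is at most `S / (2 - S)`, where
`S = |W1 ∩ W2| / √(|W1|·|W2|)` is the cosine similarity. -/
theorem minhash_upper_bound (W1 W2 : Finset ℕ) (h1 : W1.Nonempty) (h2 : W2.Nonempty) :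
    ((W1 ∩ W2).card : ℝ) / ((W1 ∪ W2).card : ℝ) ≤
      (((W1 ∩ W2).card : ℝ) / Real.sqrt ((W1.card : ℝ) * (W2.card : ℝ))) /
        (2 - ((W1 ∩ W2).card : ℝ) / Real.sqrt ((W1.card : ℝ) * (W2.card : ℝ))) :=
  minhash_upper_bound_general h1 h2
end

section
/- MinHash collision probability: let W1, W2 be nonempty subsets of the finite linearly ordered set Ω = {1, 2, ..., D}, and let π be a permutation of Ω chosen uniformly at random. Then the probability that min(π(W1)) = min(π(W2)) equals the resemblance R = |W1 ∩ W2| / |W1 ∪ W2|. -/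
/-!
Call a family of injective maps min-wise independent if, for a random member of it, the point of a
finite set `U` with the smallest image is uniformly distributed on `U`. The minima of `f` over `S`
and over `T` agree exactly when the point of `S ∪ T` with the smallest image under `f` lies in
`S ∩ T`, so for a min-wise independent family this has probability `|S ∩ T| / |S ∪ T|`. The family
of all permutations is min-wise independent by symmetry: composing with the transposition of
`x, y ∈ U` exchanges the permutations smallest at `x` with those smallest at `y`.
-/

open Finset

section

variable {F α β : Type*} [FunLike F α β] [LinearOrder β]

/-- The members `f` of the family `𝓕` with `f x` a lower bound of the values of `f` on `U`. The
point `x` is not required to lie in `U`; if it does, these are the members of `𝓕` that attain their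
minimum over `U` at `x`. -/
def minimizedAt (𝓕 : Finset F) (U : Finset α) (x : α) : Finset F :=
  {f ∈ 𝓕 | ∀ y ∈ U, f x ≤ f y}

/-- Min-wise independence of a finite family `𝓕`: a uniformly random member of `𝓕` attains its
minimum over `U` at each given point of `U` with probability `1 / #U`. Denominators are cleared, so
that the empty family qualifies. -/
def IsMinwiseIndependent (𝓕 : Finset F) : Prop :=
  ∀ ⦃U : Finset α⦄ ⦃x : α⦄, x ∈ U → #(minimizedAt 𝓕 U x) * #U = #𝓕

variable {𝓕 : Finset F} {U : Finset α} {x : α}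

lemma mem_minimizedAt {f : F} : f ∈ minimizedAt 𝓕 U x ↔ f ∈ 𝓕 ∧ ∀ y ∈ U, f x ≤ f y :=
  mem_filter

lemma pairwiseDisjoint_minimizedAt [EmbeddingLike F α β] (𝓕 : Finset F) (U : Finset α) :
    (U : Set α).PairwiseDisjoint (minimizedAt 𝓕 U) := by
  intro x hx y hy hxy
  refine disjoint_left.2 fun f hfx hfy => hxy (EmbeddingLike.injective f ?_)
  exact ((mem_minimizedAt.1 hfx).2 y hy).antisymm ((mem_minimizedAt.1 hfy).2 x hx)

lemma sum_card_minimizedAt [EmbeddingLike F α β] (𝓕 : Finset F) (hU : U.Nonempty) :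
    ∑ x ∈ U, #(minimizedAt 𝓕 U x) = #𝓕 := by
  classical
  rw [← card_biUnion (pairwiseDisjoint_minimizedAt 𝓕 U)]
  congr 1
  ext f
  simp only [mem_biUnion, mem_minimizedAt]
  refine ⟨fun ⟨_, _, hf, _⟩ => hf, fun hf => ?_⟩
  obtain ⟨x, hx, hmin⟩ := exists_min_image U f hU
  exact ⟨x, hx, hf, hmin⟩

lemma isMinwiseIndependent_of_card_minimizedAt_eq [EmbeddingLike F α β]
    (h : ∀ ⦃U : Finset α⦄ ⦃x y : α⦄, x ∈ U → y ∈ U →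
      #(minimizedAt 𝓕 U x) = #(minimizedAt 𝓕 U y)) :
    IsMinwiseIndependent 𝓕 := by
  intro U x hx
  rw [← sum_card_minimizedAt 𝓕 ⟨x, hx⟩, sum_congr rfl fun y hy => h hy hx, sum_const, smul_eq_mul,
    mul_comm]

/-- The MinHash value `h_f^min(U) = min (f(U))` of a nonempty finite set `U`, for an arbitrary map
`f` in place of a permutation. -/
def minHash (f : F) (hU : U.Nonempty) : β :=
  (U.image f).min' (hU.image f)

lemma minHash_eq_apply_iff {f : F} (hU : U.Nonempty) (hx : x ∈ U) :
    minHash f hU = f x ↔ ∀ y ∈ U, f x ≤ f y := by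
  rw [minHash, min'_eq_iff, forall_mem_image, and_iff_right (mem_image_of_mem f hx)]

lemma exists_mem_apply_eq_minHash (f : F) (hU : U.Nonempty) : ∃ x ∈ U, f x = minHash f hU :=
  mem_image.1 (min'_mem _ (hU.image f))

variable [EmbeddingLike F α β] [DecidableEq α] {S T : Finset α}

lemma minHash_eq_minHash_iff {f : F} (hS : S.Nonempty) (hT : T.Nonempty) :
    minHash f hS = minHash f hT ↔ ∃ x ∈ S ∩ T, ∀ y ∈ S ∪ T, f x ≤ f y := by
  simp only [mem_inter, forall_mem_union]
  constructor
  · intro h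
    obtain ⟨x, hxS, hx⟩ := exists_mem_apply_eq_minHash f hS
    obtain ⟨y, hyT, hy⟩ := exists_mem_apply_eq_minHash f hT
    obtain rfl : x = y := EmbeddingLike.injective f (hx.trans (h.trans hy.symm))
    exact ⟨x, ⟨hxS, hyT⟩, (minHash_eq_apply_iff hS hxS).1 hx.symm,
      (minHash_eq_apply_iff hT hyT).1 hy.symm⟩
  · rintro ⟨x, ⟨hxS, hxT⟩, hminS, hminT⟩
    rw [(minHash_eq_apply_iff hS hxS).2 hminS, (minHash_eq_apply_iff hT hxT).2 hminT]

lemma card_filter_minHash_eq (𝓕 : Finset F) (hS : S.Nonempty) (hT : T.Nonempty) :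
    #{f ∈ 𝓕 | minHash f hS = minHash f hT} = ∑ x ∈ S ∩ T, #(minimizedAt 𝓕 (S ∪ T) x) := by
  classical
  have hdisj : ((S ∩ T : Finset α) : Set α).PairwiseDisjoint (minimizedAt 𝓕 (S ∪ T)) :=
    (pairwiseDisjoint_minimizedAt 𝓕 (S ∪ T)).subset
      (coe_subset.2 (inter_subset_left.trans subset_union_left))
  rw [← card_biUnion hdisj]
  congr 1
  ext f
  simp only [mem_filter, mem_biUnion, mem_minimizedAt, minHash_eq_minHash_iff hS hT]
  tauto

lemma IsMinwiseIndependent.card_filter_minHash_eq_mul (h𝓕 : IsMinwiseIndependent 𝓕)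
    (hS : S.Nonempty) (hT : T.Nonempty) :
    #{f ∈ 𝓕 | minHash f hS = minHash f hT} * #(S ∪ T) = #(S ∩ T) * #𝓕 := by
  rw [card_filter_minHash_eq 𝓕 hS hT, sum_mul,
    sum_congr rfl fun x hx => h𝓕 (mem_union_left T (mem_inter.1 hx).1), sum_const, smul_eq_mul]

theorem minhash_collision_probability_general (h𝓕 : IsMinwiseIndependent 𝓕) (hne : 𝓕.Nonempty)
    (hS : S.Nonempty) (hT : T.Nonempty) :
    (#{f ∈ 𝓕 | minHash f hS = minHash f hT} : ℝ) / #𝓕 = #(S ∩ T) / #(S ∪ T) := by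
  have h𝓕0 : (#𝓕 : ℝ) ≠ 0 := Nat.cast_ne_zero.2 hne.card_ne_zero
  have hST0 : (#(S ∪ T) : ℝ) ≠ 0 :=
    Nat.cast_ne_zero.2 (hS.mono subset_union_left).card_ne_zero
  rw [div_eq_div_iff h𝓕0 hST0]
  exact_mod_cast h𝓕.card_filter_minHash_eq_mul hS hT

end

section

variable {α β : Type*} [Fintype α] [DecidableEq α] [Fintype β] [LinearOrder β]

lemma card_minimizedAt_univ_eq {U : Finset α} {x y : α} (hx : x ∈ U) (hy : y ∈ U) :
    #(minimizedAt (univ : Finset (α ≃ β)) U x) = #(minimizedAt (univ : Finset (α ≃ β)) U y) := by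
  have hswap : Set.BijOn (Equiv.swap x y) U U := Equiv.swap_bijOn_self (iff_of_true hx hy)
  refine card_equiv ((Equiv.swap x y).equivCongr (Equiv.refl β)) fun π => ?_
  simpa [mem_minimizedAt] using hswap.forall (p := fun z => π x ≤ π z)

lemma isMinwiseIndependent_univ : IsMinwiseIndependent (univ : Finset (α ≃ β)) :=
  isMinwiseIndependent_of_card_minimizedAt_eq fun _ _ _ => card_minimizedAt_univ_eq

end

/-- MinHash collision probability: for nonempty `W1, W2 ⊆ Fin D` and a uniformly random
permutation `π` of `Fin D`, the probability that `min (π '' W1) = min (π '' W2)` equals the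
resemblance `|W1 ∩ W2| / |W1 ∪ W2|`. -/
theorem minhash_collision_probability (D : ℕ) (W1 W2 : Finset (Fin D))
    (h1 : W1.Nonempty) (h2 : W2.Nonempty) :
    ((Finset.univ.filter (fun π : Equiv.Perm (Fin D) =>
        (W1.image π).min' (h1.image π) = (W2.image π).min' (h2.image π))).card : ℝ) /
      (Fintype.card (Equiv.Perm (Fin D)) : ℝ) =
    ((W1 ∩ W2).card : ℝ) / ((W1 ∪ W2).card : ℝ) :=
  minhash_collision_probability_general isMinwiseIndependent_univ univ_nonempty h1 h2
end

section
/- The MinHash-for-cosine gap exponent is strictly less than 1 when p1 > p2: for S0 ∈ (0,1) and c ∈ (0,1) satisfying S0(2 − cS0) > c, one has 0 < cS0/(2 − cS0) < S0² < 1, and consequently ρ = log(S0²) / log(cS0/(2 − cS0)) satisfies 0 < ρ < 1. -/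
/-! The exponent is the single logarithm `ρ = logb p₂ p₁`, and since `0 < p₂ < 1` the function
`logb p₂` is strictly decreasing, from the value `1` at `p₂` to the value `0` at `1`. So `ρ` lies
strictly between `0` and `1` as soon as `p₁` lies strictly between `p₂` and `1`. -/

theorem logb_mem_Ioo_zero_one_iff_of_base_lt_one {b x : ℝ} (hb : 0 < b) (hb' : b < 1)
    (hx : 0 < x) : Real.logb b x ∈ Set.Ioo 0 1 ↔ x ∈ Set.Ioo b 1 := by
  have hpos : 0 < Real.logb b x ↔ x < 1 := Real.logb_pos_iff_of_base_lt_one hb hb' hx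
  have hlt : Real.logb b x < 1 ↔ b < x := by
    rw [Real.logb_lt_iff_lt_rpow_of_base_lt_one hb hb' hx, Real.rpow_one]
  rw [Set.mem_Ioo, Set.mem_Ioo, hpos, hlt, and_comm]

theorem mul_div_two_sub_mul_lt_sq_iff {K : Type*} [Field K] [LinearOrder K]
    [IsStrictOrderedRing K] {c s : K} (hs : 0 < s) (hcs : c * s < 2) :
    c * s / (2 - c * s) < s ^ 2 ↔ c < s * (2 - c * s) := by
  calc c * s / (2 - c * s) < s ^ 2 ↔ c * s < s ^ 2 * (2 - c * s) := div_lt_iff₀ (sub_pos.2 hcs)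
    _ ↔ c * s < s * (2 - c * s) * s := by rw [sq, mul_right_comm]
    _ ↔ c < s * (2 - c * s) := mul_lt_mul_iff_left₀ hs

/-- The MinHash-for-cosine gap exponent is strictly less than 1 when `p1 > p2`: for
`S0 ∈ (0,1)` and `c ∈ (0,1)` with `S0(2 - c·S0) > c`, we have
`0 < cS0/(2 - cS0) < S0² < 1` and `ρ = log(S0²)/log(cS0/(2 - cS0)) ∈ (0,1)`. -/
theorem minhash_rho_lt_one (S0 c : ℝ) (hS0 : 0 < S0) (hS0' : S0 < 1)
    (hc : 0 < c) (hc' : c < 1) (hgap : S0 * (2 - c * S0) > c) :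
    (0 < c * S0 / (2 - c * S0) ∧ c * S0 / (2 - c * S0) < S0 ^ 2 ∧ S0 ^ 2 < 1) ∧
      0 < Real.log (S0 ^ 2) / Real.log (c * S0 / (2 - c * S0)) ∧
      Real.log (S0 ^ 2) / Real.log (c * S0 / (2 - c * S0)) < 1 := by
  have hcS0 : c * S0 < 2 :=
    (mul_lt_one_of_nonneg_of_lt_one_left hc.le hc' hS0'.le).trans one_lt_two
  have hp₂ : 0 < c * S0 / (2 - c * S0) := div_pos (mul_pos hc hS0) (sub_pos.2 hcS0)
  have hp₂p₁ : c * S0 / (2 - c * S0) < S0 ^ 2 := (mul_div_two_sub_mul_lt_sq_iff hS0 hcS0).2 hgap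
  have hp₁ : S0 ^ 2 < 1 := pow_lt_one₀ hS0.le hS0' two_ne_zero
  rw [Real.log_div_log]
  exact ⟨⟨hp₂, hp₂p₁, hp₁⟩, (logb_mem_Ioo_zero_one_iff_of_base_lt_one hp₂ (hp₂p₁.trans hp₁)
    (pow_pos hS0 2)).2 ⟨hp₂p₁, hp₁⟩⟩
end
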